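/- arXiv:2308.04475 — 4 statements merged into one kernel-verified Lean document; each statement's English description precedes it below -/
import Mathlib

section
/- Let G be a finite simple graph with m edges and adjacency matrix A (over the reals). Let s⁺ and s⁻ denote the sum of the squares of the positive and of the negative eigenvalues of A, respectively, and let χvec(G) be the vector chromatic number of G, defined as the supremum of ⟨J, Z⟩ over all real symmetric matrices Z indexed by the vertices of G that are entrywise nonnegative, positive semidefinite, have trace equal to 1, and satisfy Z_{uv} = 0 for every pair of distinct non-adjacent vertices u, v. Then min{s⁺, s⁻} ≥ 2m / χvec(G). -/
open Matrix Finset BigOperators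

/-- The Frobenius (trace) inner product of two real matrices. -/
noncomputable def frob {n : ℕ} (M N : Matrix (Fin n) (Fin n) ℝ) : ℝ :=
  ∑ u, ∑ v, M u v * N u v

/-- The all-ones matrix. -/
noncomputable def matJ (n : ℕ) : Matrix (Fin n) (Fin n) ℝ :=
  Matrix.of fun _ _ => (1 : ℝ)

/-- The vector chromatic number of `G`: the supremum of `⟨J, Z⟩` over all real symmetric,
entrywise nonnegative, positive semidefinite matrices `Z` with trace `1` whose entries vanish
on distinct non-adjacent pairs of vertices. -/
noncomputable def chiVec {n : ℕ} (G : SimpleGraph (Fin n)) [DecidableRel G.Adj] : ℝ :=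
  sSup { x : ℝ | ∃ Z : Matrix (Fin n) (Fin n) ℝ,
    Z.IsSymm ∧ (∀ u v, 0 ≤ Z u v) ∧ Z.PosSemidef ∧ Z.trace = 1 ∧
    (∀ u v, u ≠ v → ¬ G.Adj u v → Z u v = 0) ∧ x = frob (matJ n) Z }

/-- The adjacency matrix of a graph is hermitian (it is real symmetric). -/
theorem adjHerm {n : ℕ} (G : SimpleGraph (Fin n)) [DecidableRel G.Adj] :
    (G.adjMatrix ℝ).IsHermitian :=
  (Matrix.conjTranspose_eq_transpose_of_trivial _).trans G.isSymm_adjMatrix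

/-- `s⁺`: the sum of the squares of the positive eigenvalues of the adjacency matrix,
counted with multiplicity. -/
noncomputable def sPlus {n : ℕ} (G : SimpleGraph (Fin n)) [DecidableRel G.Adj] : ℝ :=
  ∑ i, if 0 < (adjHerm G).eigenvalues i then ((adjHerm G).eigenvalues i) ^ 2 else 0

/-- `s⁻`: the sum of the squares of the negative eigenvalues of the adjacency matrix,
counted with multiplicity. -/
noncomputable def sMinus {n : ℕ} (G : SimpleGraph (Fin n)) [DecidableRel G.Adj] : ℝ :=
  ∑ i, if (adjHerm G).eigenvalues i < 0 then ((adjHerm G).eigenvalues i) ^ 2 else 0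

/-- `A⁺ = Σ_{θ>0} θ E_θ`: the positive part of the adjacency matrix, obtained from its
spectral decomposition. -/
noncomputable def Aplus {n : ℕ} (G : SimpleGraph (Fin n)) [DecidableRel G.Adj] :
    Matrix (Fin n) (Fin n) ℝ :=
  ((adjHerm G).eigenvectorUnitary : Matrix (Fin n) (Fin n) ℝ) *
    diagonal (fun i => if 0 < (adjHerm G).eigenvalues i then (adjHerm G).eigenvalues i else 0) *
    star ((adjHerm G).eigenvectorUnitary : Matrix (Fin n) (Fin n) ℝ)

/-- `A⁻ = -Σ_{λ<0} λ E_λ`: the negative part of the adjacency matrix, obtained from its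
spectral decomposition. -/
noncomputable def Aminus {n : ℕ} (G : SimpleGraph (Fin n)) [DecidableRel G.Adj] :
    Matrix (Fin n) (Fin n) ℝ :=
  ((adjHerm G).eigenvectorUnitary : Matrix (Fin n) (Fin n) ℝ) *
    diagonal (fun i => if (adjHerm G).eigenvalues i < 0 then -(adjHerm G).eigenvalues i else 0) *
    star ((adjHerm G).eigenvectorUnitary : Matrix (Fin n) (Fin n) ℝ)

/-!
Write `A = A⁺ - A⁻` with `A⁺`, `A⁻` positive semidefinite and orthogonal, so `s⁺ = ⟨A⁺, A⁺⟩`,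
`s⁻ = ⟨A⁻, A⁻⟩` and `2m = ⟨A, A⟩ = s⁺ + s⁻`. To bound `q = s⁻`, let `P = A⁺` and `p = s⁺`.

If `R` is entrywise nonnegative and positive semidefinite, adding to it the Laplacian of the weights
that `R` puts outside the edges of `G` kills those off-diagonal weights, keeps `⟨J, R⟩`, keeps `R`
positive semidefinite and makes its trace `⟨J - A, R⟩`; hence `⟨J, R⟩ ≤ χvec(G) ⟨J - A, R⟩`. By the
Schur product theorem this applies to `R = P ∘ P`, and gives `p ≤ χvec(G) (p - ⟨A, P ∘ P⟩)`. By
Cauchy–Schwarz `p² = ⟨A, P⟩² ≤ 2m ⟨A, P ∘ P⟩`, so `2m p ≤ χvec(G) (2m p - p²) = χvec(G) p q`.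
The bound on `s⁺` is the same argument for `-A`; both are signings of `A`, that is, matrices `S`
with `S ∘ S = A`, and the argument works for every signing `S = P - N`.
-/

section WeightedLaplacian

variable {V R : Type*} [Fintype V] [DecidableEq V]

/-- The Laplacian of the graph on `V` with edge weights `W`, a source of positive semidefinite
matrices with zero row sums. Diagonal entries of `W` (loops) cancel out. -/
def weightedLaplacian [AddCommGroup R] (W : Matrix V V R) : Matrix V V R :=
  diagonal (fun u => ∑ w, W u w) - W

theorem sum_weightedLaplacian_apply [AddCommGroup R] (W : Matrix V V R) (u : V) :
    ∑ v, weightedLaplacian W u v = 0 := by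
  simp [weightedLaplacian, diagonal_apply]

theorem isSymm_weightedLaplacian [AddCommGroup R] {W : Matrix V V R} (hW : W.IsSymm) :
    (weightedLaplacian W).IsSymm :=
  (isSymm_diagonal _).sub hW

theorem dotProduct_weightedLaplacian_mulVec [CommRing R] (W : Matrix V V R) (x : V → R) :
    x ⬝ᵥ weightedLaplacian W *ᵥ x = ∑ u, ∑ v, W u v * (x u ^ 2 - x u * x v) := by
  rw [weightedLaplacian, sub_mulVec, dotProduct_sub]
  simp only [dotProduct, mulVec_diagonal]
  simp only [mulVec, dotProduct, mul_sum, sum_mul, ← sum_sub_distrib]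
  exact sum_congr rfl fun u _ => sum_congr rfl fun v _ => by ring

theorem two_mul_dotProduct_weightedLaplacian_mulVec [CommRing R] {W : Matrix V V R}
    (hW : W.IsSymm) (x : V → R) :
    2 * (x ⬝ᵥ weightedLaplacian W *ᵥ x) = ∑ u, ∑ v, W u v * (x u - x v) ^ 2 := by
  have swap : ∑ u, ∑ v, W u v * (x u ^ 2 - x u * x v) =
      ∑ u, ∑ v, W u v * (x v ^ 2 - x u * x v) := by
    rw [sum_comm]
    exact sum_congr rfl fun u _ => sum_congr rfl fun v _ => by rw [hW.apply, mul_comm (x u)]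
  rw [dotProduct_weightedLaplacian_mulVec, two_mul]
  nth_rewrite 2 [swap]
  simp only [← sum_add_distrib]
  exact sum_congr rfl fun u _ => sum_congr rfl fun v _ => by ring

theorem posSemidef_weightedLaplacian [CommRing R] [LinearOrder R] [IsStrictOrderedRing R]
    [StarRing R] [TrivialStar R] {W : Matrix V V R} (hW : W.IsSymm) (hW₀ : ∀ u v, 0 ≤ W u v) :
    (weightedLaplacian W).PosSemidef := by
  refine .of_dotProduct_mulVec_nonneg
    ((conjTranspose_eq_transpose_of_trivial _).trans (isSymm_weightedLaplacian hW)) fun x => ?_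
  rw [star_trivial]
  refine nonneg_of_mul_nonneg_right (a := 2) ?_ two_pos
  rw [two_mul_dotProduct_weightedLaplacian_mulVec hW]
  exact sum_nonneg fun u _ => sum_nonneg fun v _ => mul_nonneg (hW₀ u v) (sq_nonneg _)

end WeightedLaplacian

section PosSemidef

theorem isSymm_of_posSemidef {V R : Type*} [Ring R] [PartialOrder R] [StarRing R] [TrivialStar R]
    {Z : Matrix V V R} (hZ : Z.PosSemidef) : Z.IsSymm :=
  (conjTranspose_eq_transpose_of_trivial Z).symm.trans hZ.isHermitian

variable {V R : Type*} [CommRing R] [LinearOrder R] [IsStrictOrderedRing R] [StarRing R]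
  [TrivialStar R] {Z : Matrix V V R}

theorem two_mul_apply_le_of_posSemidef (hZ : Z.PosSemidef) (u v : V) :
    2 * Z u v ≤ Z u u + Z v v := by
  have quadratic : 0 ≤ Z u u + -Z u v + (Z v v + -Z v u) := by
    simpa [dotProduct, mulVec, Fin.sum_univ_two] using
      (hZ.submatrix ![u, v]).dotProduct_mulVec_nonneg ![1, -1]
  have symm : Z v u = Z u v := (isSymm_of_posSemidef hZ).apply u v
  linarith

theorem sum_sum_apply_le_card_mul_trace_of_posSemidef [Fintype V] (hZ : Z.PosSemidef) :
    ∑ u, ∑ v, Z u v ≤ Fintype.card V * Z.trace := by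
  refine le_of_mul_le_mul_left (a := 2) ?_ two_pos
  calc 2 * ∑ u, ∑ v, Z u v = ∑ u, ∑ v, 2 * Z u v := by simp only [mul_sum]
    _ ≤ ∑ u, ∑ v, (Z u u + Z v v) :=
        sum_le_sum fun u _ => sum_le_sum fun v _ => two_mul_apply_le_of_posSemidef hZ u v
    _ = 2 * (Fintype.card V * Z.trace) := by
        simp [sum_add_distrib, trace, ← mul_sum, two_mul]

end PosSemidef

section AdjMatrix

variable {V R : Type*} [Fintype V] [NonAssocSemiring R] (G : SimpleGraph V) [DecidableRel G.Adj]

theorem sum_sum_adjMatrix_apply :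
    ∑ u, ∑ v, G.adjMatrix R u v = 2 * (#G.edgeFinset : R) := by
  have row_sum (u : V) : ∑ v, G.adjMatrix R u v = G.degree u := by
    simp [SimpleGraph.adjMatrix_apply, ← SimpleGraph.neighborFinset_eq_filter]
  simp only [row_sum]
  exact_mod_cast congrArg (Nat.cast (R := R)) G.sum_degrees_eq_twice_card_edges

end AdjMatrix

section Frob

variable {n : ℕ} (M N K : Matrix (Fin n) (Fin n) ℝ)

theorem frob_eq_trace_mul_transpose : frob M N = (M * Nᵀ).trace :=
  sum_hadamard_eq M N

theorem frob_comm : frob M N = frob N M := by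
  simp only [frob, mul_comm]

theorem frob_sub_left : frob (M - N) K = frob M K - frob N K := by
  simp only [frob, Matrix.sub_apply, sub_mul, sum_sub_distrib]

theorem frob_hadamard_right : frob M (N ⊙ K) = frob (M ⊙ N) K := by
  simp only [frob, hadamard_apply, mul_assoc]

theorem matJ_hadamard : matJ n ⊙ M = M :=
  of_one_hadamard M

theorem frob_matJ : frob (matJ n) M = ∑ u, ∑ v, M u v := by
  simp [frob, matJ]

theorem frob_self_nonneg : 0 ≤ frob M M :=
  sum_nonneg fun _ _ => sum_nonneg fun _ _ => mul_self_nonneg _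

theorem frob_self_eq_zero_iff {M : Matrix (Fin n) (Fin n) ℝ} : frob M M = 0 ↔ M = 0 := by
  rw [frob_eq_trace_mul_transpose, ← conjTranspose_eq_transpose_of_trivial,
    trace_mul_conjTranspose_self_eq_zero_iff]

theorem frob_sq_le_frob_self_mul_frob_self : frob M N ^ 2 ≤ frob M M * frob N N := by
  simpa only [frob, sq, ← sum_product', univ_product_univ] using
    sum_mul_sq_le_sq_mul_sq univ (fun i : Fin n × Fin n => M i.1 i.2) (fun i => N i.1 i.2)

theorem frob_conj_diagonal_of_mem_unitaryGroup {U : Matrix (Fin n) (Fin n) ℝ}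
    (hU : U ∈ unitaryGroup (Fin n) ℝ) (d f : Fin n → ℝ) :
    frob (U * diagonal d * star U) (U * diagonal f * star U) = d ⬝ᵥ f := by
  have orthonormal : star U * U = 1 := Unitary.star_mul_self_of_mem hU
  have isSymm : (U * diagonal f * star U)ᵀ = U * diagonal f * star U := by
    simp [star_eq_conjTranspose, Matrix.mul_assoc]
  calc frob (U * diagonal d * star U) (U * diagonal f * star U)
      = trace (U * (diagonal d * (star U * U) * diagonal f) * star U) := by
        rw [frob_eq_trace_mul_transpose, isSymm]
        simp only [Matrix.mul_assoc]
    _ = d ⬝ᵥ f := by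
        rw [orthonormal, Matrix.mul_one, trace_mul_cycle, orthonormal, Matrix.one_mul,
          diagonal_mul_diagonal, trace_diagonal, dotProduct]

end Frob

section ChiVec

/-- The cone of matrices whose trace-one members are those over which `chiVec G` takes the
supremum. Symmetry is contained in `Matrix.PosSemidef`. -/
structure IsChiVecFeasible {V : Type*} (G : SimpleGraph V) (Z : Matrix V V ℝ) : Prop where
  nonneg : ∀ u v, 0 ≤ Z u v
  posSemidef : Z.PosSemidef
  eq_zero_of_not_adj : ∀ u v, u ≠ v → ¬ G.Adj u v → Z u v = 0

theorem IsChiVecFeasible.smul {V : Type*} {G : SimpleGraph V} {Z : Matrix V V ℝ}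
    (hZ : IsChiVecFeasible G Z) {c : ℝ} (hc : 0 ≤ c) : IsChiVecFeasible G (c • Z) where
  nonneg u v := mul_nonneg hc (hZ.nonneg u v)
  posSemidef := hZ.posSemidef.smul hc
  eq_zero_of_not_adj u v huv hadj := by simp [hZ.eq_zero_of_not_adj u v huv hadj]

/-- The linear projection onto the matrices supported on the diagonal and the edges of `G` that
moves the remaining entries of each row onto the diagonal. Adding a Laplacian is what preserves
positive semidefiniteness, so it produces feasible matrices for `chiVec G`. -/
noncomputable def laplacianProjection {V : Type*} [Fintype V] [DecidableEq V] (G : SimpleGraph V)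
    [DecidableRel G.Adj] (R : Matrix V V ℝ) : Matrix V V ℝ :=
  R + weightedLaplacian (R - G.adjMatrix ℝ ⊙ R)

section LaplacianProjection

variable {V : Type*} [Fintype V] [DecidableEq V] (G : SimpleGraph V) [DecidableRel G.Adj]
  (R : Matrix V V ℝ)

theorem laplacianProjection_eq_hadamard_add_diagonal :
    laplacianProjection G R =
      G.adjMatrix ℝ ⊙ R + diagonal fun u => ∑ v, (R - G.adjMatrix ℝ ⊙ R) u v := by
  rw [laplacianProjection, weightedLaplacian]
  abel

theorem sum_sum_laplacianProjection_apply :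
    ∑ u, ∑ v, laplacianProjection G R u v = ∑ u, ∑ v, R u v := by
  simp only [laplacianProjection, Matrix.add_apply, sum_add_distrib, sum_weightedLaplacian_apply,
    add_zero]

theorem trace_laplacianProjection :
    (laplacianProjection G R).trace = ∑ u, ∑ v, (R - G.adjMatrix ℝ ⊙ R) u v := by
  rw [laplacianProjection_eq_hadamard_add_diagonal, trace_add, trace_diagonal]
  simp [trace]

variable {R}

theorem isChiVecFeasible_laplacianProjection (hR : R.PosSemidef) (hR₀ : ∀ u v, 0 ≤ R u v) :
    IsChiVecFeasible G (laplacianProjection G R) := by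
  have nonedge_nonneg (u v : V) : 0 ≤ (R - G.adjMatrix ℝ ⊙ R) u v := by
    by_cases hadj : G.Adj u v <;> simp [hadj, hR₀ u v]
  have edge_nonneg (u v : V) : 0 ≤ (G.adjMatrix ℝ ⊙ R) u v := by
    by_cases hadj : G.Adj u v <;> simp [hadj, hR₀ u v]
  have nonedge_isSymm : (R - G.adjMatrix ℝ ⊙ R).IsSymm := by
    rw [IsSymm, transpose_sub, transpose_hadamard, isSymm_of_posSemidef hR,
      G.transpose_adjMatrix]
  refine ⟨fun u v => ?_, hR.add (posSemidef_weightedLaplacian nonedge_isSymm nonedge_nonneg),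
    fun u v huv hadj => ?_⟩
  · rw [laplacianProjection_eq_hadamard_add_diagonal, Matrix.add_apply, diagonal_apply]
    refine add_nonneg (edge_nonneg u v) ?_
    split_ifs
    exacts [sum_nonneg fun w _ => nonedge_nonneg u w, le_rfl]
  · simp [laplacianProjection_eq_hadamard_add_diagonal, huv, hadj]

end LaplacianProjection

variable {n : ℕ} (G : SimpleGraph (Fin n)) [DecidableRel G.Adj]

theorem chiVec_eq_sSup_isChiVecFeasible : chiVec G =
    sSup {x | ∃ Z, IsChiVecFeasible G Z ∧ Z.trace = 1 ∧ x = frob (matJ n) Z} := by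
  refine congrArg sSup (Set.ext fun x => exists_congr fun Z => ⟨?_, ?_⟩)
  · rintro ⟨-, hnonneg, hpos, htrace, hzero, hx⟩
    exact ⟨⟨hnonneg, hpos, hzero⟩, htrace, hx⟩
  · rintro ⟨hZ, htrace, hx⟩
    exact ⟨isSymm_of_posSemidef hZ.posSemidef, hZ.nonneg, hZ.posSemidef, htrace,
      hZ.eq_zero_of_not_adj, hx⟩

theorem chiVec_nonneg : 0 ≤ chiVec G := by
  rw [chiVec_eq_sSup_isChiVecFeasible]
  refine Real.sSup_nonneg ?_
  rintro x ⟨Z, hZ, -, rfl⟩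
  rw [frob_matJ]
  exact sum_nonneg fun u _ => sum_nonneg fun v _ => hZ.nonneg u v

variable {G}

theorem frob_matJ_le_chiVec {Z : Matrix (Fin n) (Fin n) ℝ} (hZ : IsChiVecFeasible G Z)
    (htrace : Z.trace = 1) : frob (matJ n) Z ≤ chiVec G := by
  rw [chiVec_eq_sSup_isChiVecFeasible]
  refine le_csSup ⟨n, ?_⟩ ⟨Z, hZ, htrace, rfl⟩
  rintro x ⟨Y, hY, hY_trace, rfl⟩
  simpa [frob_matJ, hY_trace] using sum_sum_apply_le_card_mul_trace_of_posSemidef hY.posSemidef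

theorem frob_matJ_le_chiVec_mul_trace {Z : Matrix (Fin n) (Fin n) ℝ}
    (hZ : IsChiVecFeasible G Z) : frob (matJ n) Z ≤ chiVec G * Z.trace := by
  obtain htrace | htrace := hZ.posSemidef.trace_nonneg.eq_or_lt
  · simp [frob_matJ, hZ.posSemidef.trace_eq_zero_iff.1 htrace.symm]
  · have normalized : frob (matJ n) (Z.trace⁻¹ • Z) ≤ chiVec G :=
      frob_matJ_le_chiVec (hZ.smul (inv_nonneg.2 htrace.le))
        (by rw [trace_smul, smul_eq_mul, inv_mul_cancel₀ htrace.ne'])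
    rw [← div_le_iff₀ htrace]
    simpa [frob_matJ, ← mul_sum, div_eq_inv_mul] using normalized

theorem frob_matJ_le_chiVec_mul_frob_matJ_sub_adjMatrix {R : Matrix (Fin n) (Fin n) ℝ}
    (hR : R.PosSemidef) (hR₀ : ∀ u v, 0 ≤ R u v) :
    frob (matJ n) R ≤ chiVec G * frob (matJ n - G.adjMatrix ℝ) R := by
  have bound := frob_matJ_le_chiVec_mul_trace (isChiVecFeasible_laplacianProjection G hR hR₀)
  rw [frob_matJ, sum_sum_laplacianProjection_apply, trace_laplacianProjection] at bound
  rw [frob_sub_left, frob_matJ]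
  simpa only [frob, Matrix.sub_apply, hadamard_apply, sum_sub_distrib] using bound

end ChiVec

section Signing

variable {n : ℕ} {G : SimpleGraph (Fin n)} [DecidableRel G.Adj] {S P N : Matrix (Fin n) (Fin n) ℝ}

theorem frob_self_of_hadamard_self_eq_adjMatrix (hS : S ⊙ S = G.adjMatrix ℝ) :
    frob S S = 2 * (#G.edgeFinset : ℝ) := by
  rw [← sum_sum_adjMatrix_apply, ← hS]
  rfl

theorem hadamard_adjMatrix_of_hadamard_self_eq_adjMatrix (hS : S ⊙ S = G.adjMatrix ℝ) :
    S ⊙ G.adjMatrix ℝ = S := by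
  ext u v
  have square : S u v * S u v = G.adjMatrix ℝ u v := congrFun₂ hS u v
  by_cases hadj : G.Adj u v
  · simp [hadj]
  · simpa [hadj, eq_comm] using square

theorem trace_eq_zero_of_hadamard_self_eq_adjMatrix (hS : S ⊙ S = G.adjMatrix ℝ) :
    S.trace = 0 := by
  have diag_eq_zero (u : Fin n) : S u u = 0 := by
    simpa using congrFun₂ hS u u
  simp [trace, diag_eq_zero]

theorem frob_sq_le_of_hadamard_self_eq_adjMatrix (hS : S ⊙ S = G.adjMatrix ℝ)
    (M : Matrix (Fin n) (Fin n) ℝ) :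
    frob S M ^ 2 ≤ 2 * (#G.edgeFinset : ℝ) * frob (G.adjMatrix ℝ) (M ⊙ M) := by
  calc frob S M ^ 2 = frob S (G.adjMatrix ℝ ⊙ M) ^ 2 := by
        rw [frob_hadamard_right, hadamard_adjMatrix_of_hadamard_self_eq_adjMatrix hS]
    _ ≤ frob S S * frob (G.adjMatrix ℝ ⊙ M) (G.adjMatrix ℝ ⊙ M) :=
        frob_sq_le_frob_self_mul_frob_self _ _
    _ = 2 * (#G.edgeFinset : ℝ) * frob (G.adjMatrix ℝ) (M ⊙ M) := by
        rw [frob_self_of_hadamard_self_eq_adjMatrix hS, frob_hadamard_right, frob_hadamard_right,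
          hadamard_comm _ M, hadamard_assoc, SimpleGraph.adjMatrix_hadamard_self, hadamard_comm M]

theorem two_mul_card_edgeFinset_eq_add (hS : (P - N) ⊙ (P - N) = G.adjMatrix ℝ)
    (hPN : frob P N = 0) : 2 * (#G.edgeFinset : ℝ) = frob P P + frob N N := by
  rw [← frob_self_of_hadamard_self_eq_adjMatrix hS, frob_sub_left, frob_comm P, frob_comm N,
    frob_sub_left, frob_sub_left, frob_comm N P, hPN]
  ring

theorem two_mul_card_edgeFinset_le_frob_self_mul_chiVec (hP : P.PosSemidef) (hN : N.PosSemidef)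
    (hS : (P - N) ⊙ (P - N) = G.adjMatrix ℝ) (hPN : frob P N = 0) :
    2 * (#G.edgeFinset : ℝ) ≤ frob N N * chiVec G := by
  have edges : 2 * (#G.edgeFinset : ℝ) = frob P P + frob N N :=
    two_mul_card_edgeFinset_eq_add hS hPN
  obtain hp | hp := (frob_self_nonneg P).eq_or_lt
  · have hP_zero : P = 0 := frob_self_eq_zero_iff.1 hp.symm
    have hN_zero : N = 0 := hN.trace_eq_zero_iff.1 <| by
      simpa [hP_zero] using trace_eq_zero_of_hadamard_self_eq_adjMatrix hS
    simp [edges, hP_zero, hN_zero, frob]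
  · have cauchySchwarz : frob P P ^ 2 ≤ 2 * (#G.edgeFinset : ℝ) * frob (G.adjMatrix ℝ) (P ⊙ P) := by
      simpa [frob_sub_left, frob_comm N P, hPN] using
        frob_sq_le_of_hadamard_self_eq_adjMatrix hS P
    have feasible : frob P P ≤ chiVec G * (frob P P - frob (G.adjMatrix ℝ) (P ⊙ P)) := by
      simpa only [frob_sub_left, frob_hadamard_right (matJ n), matJ_hadamard] using
        frob_matJ_le_chiVec_mul_frob_matJ_sub_adjMatrix (G := G) (hP.hadamard hP)
          fun u v => mul_self_nonneg (P u v)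
    refine le_of_mul_le_mul_right ?_ hp
    calc 2 * (#G.edgeFinset : ℝ) * frob P P
        ≤ 2 * (#G.edgeFinset : ℝ) *
            (chiVec G * (frob P P - frob (G.adjMatrix ℝ) (P ⊙ P))) := by gcongr
      _ = chiVec G * (2 * (#G.edgeFinset : ℝ) * frob P P -
            2 * (#G.edgeFinset : ℝ) * frob (G.adjMatrix ℝ) (P ⊙ P)) := by ring
      _ ≤ chiVec G * (2 * (#G.edgeFinset : ℝ) * frob P P - frob P P ^ 2) := by
          gcongr
          exact chiVec_nonneg G
      _ = frob N N * chiVec G * frob P P := by rw [edges]; ring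

theorem two_mul_card_edgeFinset_div_chiVec_le_frob_self (hP : P.PosSemidef) (hN : N.PosSemidef)
    (hS : (P - N) ⊙ (P - N) = G.adjMatrix ℝ) (hPN : frob P N = 0) :
    2 * (#G.edgeFinset : ℝ) / chiVec G ≤ frob N N :=
  div_le_of_le_mul₀ (chiVec_nonneg G) (frob_self_nonneg N)
    (two_mul_card_edgeFinset_le_frob_self_mul_chiVec hP hN hS hPN)

end Signing

section SpectralParts

variable {n : ℕ} (G : SimpleGraph (Fin n)) [DecidableRel G.Adj]

theorem posSemidef_Aplus : (Aplus G).PosSemidef := by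
  refine (PosSemidef.diagonal fun i => ?_).mul_mul_conjTranspose_same _
  dsimp only [Pi.zero_apply]
  split_ifs with h
  exacts [h.le, le_rfl]

theorem posSemidef_Aminus : (Aminus G).PosSemidef := by
  refine (PosSemidef.diagonal fun i => ?_).mul_mul_conjTranspose_same _
  dsimp only [Pi.zero_apply]
  split_ifs with h
  exacts [neg_nonneg.2 h.le, le_rfl]

theorem Aplus_sub_Aminus : Aplus G - Aminus G = G.adjMatrix ℝ := by
  conv_rhs => rw [(adjHerm G).spectral_theorem, Unitary.conjStarAlgAut_apply]
  rw [Aplus, Aminus, ← Matrix.sub_mul, ← Matrix.mul_sub, diagonal_sub]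
  congr 3
  ext i
  simp only [Function.comp, RCLike.ofReal_real_eq_id, id]
  split_ifs <;> linarith

theorem frob_Aplus_self : frob (Aplus G) (Aplus G) = sPlus G := by
  rw [Aplus, frob_conj_diagonal_of_mem_unitaryGroup (adjHerm G).eigenvectorUnitary.2,
    sPlus, dotProduct]
  exact sum_congr rfl fun i _ => by split_ifs <;> ring

theorem frob_Aminus_self : frob (Aminus G) (Aminus G) = sMinus G := by
  rw [Aminus, frob_conj_diagonal_of_mem_unitaryGroup (adjHerm G).eigenvectorUnitary.2,
    sMinus, dotProduct]
  exact sum_congr rfl fun i _ => by split_ifs <;> ring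

theorem frob_Aplus_Aminus : frob (Aplus G) (Aminus G) = 0 := by
  rw [Aplus, Aminus, frob_conj_diagonal_of_mem_unitaryGroup (adjHerm G).eigenvectorUnitary.2,
    dotProduct]
  refine sum_eq_zero fun i _ => ?_
  rcases lt_trichotomy ((adjHerm G).eigenvalues i) 0 with h | h | h <;> simp [h, h.le]

end SpectralParts

/-- **Theorem 1** (Coutinho–Spier). For every graph `G` with `m` edges,
`min {s⁺, s⁻} ≥ 2m / χvec(G)`. -/
theorem min_sum_squares_ge_two_m_div_chiVec {n : ℕ} (G : SimpleGraph (Fin n))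
    [DecidableRel G.Adj] :
    min (sPlus G) (sMinus G) ≥ 2 * (G.edgeFinset.card : ℝ) / chiVec G := by
  have hS : (Aplus G - Aminus G) ⊙ (Aplus G - Aminus G) = G.adjMatrix ℝ := by
    rw [Aplus_sub_Aminus, SimpleGraph.adjMatrix_hadamard_self]
  have hS_swap : (Aminus G - Aplus G) ⊙ (Aminus G - Aplus G) = G.adjMatrix ℝ := by
    rw [← hS]
    ext u v
    simp only [hadamard_apply, Matrix.sub_apply]
    ring
  refine le_min ?_ ?_
  · rw [← frob_Aplus_self]
    exact two_mul_card_edgeFinset_div_chiVec_le_frob_self (posSemidef_Aminus G)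
      (posSemidef_Aplus G) hS_swap (by rw [frob_comm, frob_Aplus_Aminus])
  · rw [← frob_Aminus_self]
    exact two_mul_card_edgeFinset_div_chiVec_le_frob_self (posSemidef_Aplus G)
      (posSemidef_Aminus G) hS (frob_Aplus_Aminus G)
end

section
/- Let G be a finite simple graph, let μ ≥ 0 be a real number, and let X and Y be real positive semidefinite symmetric matrices with rows and columns indexed by the vertices of G. Suppose that XY = 0, that X_{uv} = Y_{uv} for every ordered pair (u,v) of vertices that is not an edge of G (including diagonal pairs u = v), and that ‖X‖² ≤ (1 + μ) · Σ_{(u,v) not an edge} X_{uv}². Then ‖X‖² ≤ μ · ‖Y‖². -/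
open Matrix Finset BigOperators

/-!
Let `N` be the squared norm of the common part of `X` and `Y`, supported on the non-edges, and let
`a`, `b` be the squared norms of their parts supported on the edges. The bound on `X` says
`a ≤ μ N`. Since `X` and `Y` are orthogonal, their edge parts have inner product `-N`, so
Cauchy–Schwarz gives `N² ≤ a b ≤ N (μ b)`, hence `N ≤ μ b`. Adding the two bounds gives
`N + a ≤ μ (N + b)`.
-/

theorem le_of_sq_le_mul {M : Type*} [MonoidWithZero M] [LinearOrder M] [PosMulReflectLE M]
    {a b : M} (hb : 0 ≤ b) (h : a ^ 2 ≤ a * b) : a ≤ b := by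
  by_contra! hba
  have ha : 0 < a := hb.trans_lt hba
  exact hba.not_ge (le_of_mul_le_mul_left (sq a ▸ h) ha)

section OrderedRing

variable {R : Type*} [CommRing R] [LinearOrder R] [IsStrictOrderedRing R]

theorem sum_sq_le_mul_sum_sq_of_sum_mul_eq_zero {ι : Type*} {s : Finset ι} {p : ι → Prop}
    [DecidablePred p] {f g : ι → R} {μ : R} (hμ : 0 ≤ μ)
    (hfg : ∀ i ∈ s, p i → f i = g i) (horth : ∑ i ∈ s, f i * g i = 0)
    (hbound : ∑ i ∈ s, f i ^ 2 ≤ (1 + μ) * ∑ i ∈ s with p i, f i ^ 2) :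
    ∑ i ∈ s, f i ^ 2 ≤ μ * ∑ i ∈ s, g i ^ 2 := by
  set N := ∑ i ∈ s with p i, f i ^ 2 with hN
  set a := ∑ i ∈ s with ¬p i, f i ^ 2
  set b := ∑ i ∈ s with ¬p i, g i ^ 2
  have hf_split : ∑ i ∈ s, f i ^ 2 = N + a := (sum_filter_add_sum_filter_not s p _).symm
  have hg_split : ∑ i ∈ s, g i ^ 2 = N + b := by
    rw [← sum_filter_add_sum_filter_not s p, hN]
    congr 1
    exact sum_congr rfl fun i hi ↦ by
      rw [hfg i (mem_of_mem_filter i hi) (mem_filter.mp hi).2]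
  have h_inner : ∑ i ∈ s with ¬p i, f i * g i = -N := by
    rw [← sum_filter_add_sum_filter_not s p] at horth
    rw [eq_neg_of_add_eq_zero_right horth, hN]
    congr 1
    exact sum_congr rfl fun i hi ↦ by
      rw [← hfg i (mem_of_mem_filter i hi) (mem_filter.mp hi).2, sq]
  have hb : 0 ≤ b := sum_nonneg fun i _ ↦ sq_nonneg (g i)
  have ha_le : a ≤ μ * N := by linarith
  have hN_sq : N ^ 2 ≤ N * (μ * b) := calc
    N ^ 2 = (∑ i ∈ s with ¬p i, f i * g i) ^ 2 := by rw [h_inner, neg_sq]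
    _ ≤ a * b := sum_mul_sq_le_sq_mul_sq _ f g
    _ ≤ μ * N * b := mul_le_mul_of_nonneg_right ha_le hb
    _ = N * (μ * b) := by ring
  have hN_le : N ≤ μ * b := le_of_sq_le_mul (mul_nonneg hμ hb) hN_sq
  rw [hf_split, hg_split]
  linarith

theorem normSq_le_mu_mul_normSq_general {m n : Type*} [Fintype m] [Fintype n]
    (r : m → n → Prop) [∀ u, DecidablePred (r u)] {μ : R} (hμ : 0 ≤ μ) {X Y : Matrix m n R}
    (hXY : (X * Yᵀ).trace = 0) (hr : ∀ u v, r u v → X u v = Y u v)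
    (hbound : ∑ u, ∑ v, X u v ^ 2 ≤ (1 + μ) * ∑ u, ∑ v, if r u v then X u v ^ 2 else 0) :
    ∑ u, ∑ v, X u v ^ 2 ≤ μ * ∑ u, ∑ v, Y u v ^ 2 := by
  rw [← sum_hadamard_eq] at hXY
  simp only [hadamard_apply, ← Fintype.sum_prod_type'] at hXY hbound ⊢
  rw [← sum_filter] at hbound
  exact sum_sq_le_mul_sum_sq_of_sum_mul_eq_zero hμ (fun i _ ↦ hr i.1 i.2) hXY hbound

end OrderedRing

/-- **Lemma 3** (after Guo–Spiro). Let `X` and `Y` be real positive semidefinite symmetric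
matrices indexed by the vertices of `G` with `XY = 0`, `X_{uv} = Y_{uv}` whenever `(u,v)` is
not an edge, and `‖X‖² ≤ (1 + μ) Σ_{(u,v) not an edge} X_{uv}²`. Then `‖X‖² ≤ μ ‖Y‖²`. -/
theorem normSq_le_mu_mul_normSq {n : ℕ} (G : SimpleGraph (Fin n)) [DecidableRel G.Adj]
    (μ : ℝ) (hμ : 0 ≤ μ) (X Y : Matrix (Fin n) (Fin n) ℝ) (hXs : X.IsSymm) (hYs : Y.IsSymm)
    (hX : X.PosSemidef) (hY : Y.PosSemidef)
    (hXY : X * Y = 0) (hoff : ∀ u v, ¬ G.Adj u v → X u v = Y u v)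
    (hbound : ∑ u, ∑ v, (X u v) ^ 2 ≤
      (1 + μ) * ∑ u, ∑ v, if ¬ G.Adj u v then (X u v) ^ 2 else 0) :
    ∑ u, ∑ v, (X u v) ^ 2 ≤ μ * ∑ u, ∑ v, (Y u v) ^ 2 :=
  normSq_le_mu_mul_normSq_general (fun u v ↦ ¬G.Adj u v) hμ
    (by rw [hYs.eq, hXY, trace_zero]) hoff hbound
end

section
/- Let G be a finite simple graph and let X and Y be real symmetric matrices indexed by the vertices of G such that XY = 0 and X_{uv} = Y_{uv} for every ordered pair (u,v) of vertices that is not an edge of G (including diagonal pairs u = v). Set d := Σ_{(u,v) not an edge} X_{uv}². Then (‖X‖² + ‖Y‖²) · d ≤ ‖X‖² · ‖Y‖². -/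
open Matrix Finset BigOperators

/-!
Since `X * Y = 0` and `Y` is symmetric, `X` and `Y` are orthogonal for the Frobenius inner product.
The non-edges contribute `d` to each of `⟪X, Y⟫ = 0`, `‖X‖²` and `‖Y‖²`, so the edges contribute
`-d`, `‖X‖² - d` and `‖Y‖² - d`. Cauchy–Schwarz on the edges gives
`d² ≤ (‖X‖² - d) (‖Y‖² - d)`, in which the terms `d²` cancel.
-/

section

variable {ι m n R : Type*} [CommRing R] [LinearOrder R] [IsStrictOrderedRing R]

theorem sq_sum_sq_le_of_sum_mul_eq_zero {s t : Finset ι} (hst : s ⊆ t) {f g : ι → R}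
    (hfg : ∑ i ∈ t, f i * g i = 0) (hs : ∀ i ∈ s, f i = g i) :
    (∑ i ∈ s, f i ^ 2) ^ 2 ≤
      (∑ i ∈ t, f i ^ 2 - ∑ i ∈ s, f i ^ 2) * (∑ i ∈ t, g i ^ 2 - ∑ i ∈ s, f i ^ 2) := by
  classical
  have h_mul : ∑ i ∈ s, f i * g i = ∑ i ∈ s, f i ^ 2 :=
    sum_congr rfl fun i hi => by rw [← hs i hi, sq]
  have h_sq : ∑ i ∈ s, g i ^ 2 = ∑ i ∈ s, f i ^ 2 :=
    sum_congr rfl fun i hi => by rw [hs i hi]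
  calc (∑ i ∈ s, f i ^ 2) ^ 2
      = (∑ i ∈ t \ s, f i * g i) ^ 2 := by
        rw [sum_sdiff_eq_sub hst, hfg, h_mul, zero_sub, neg_sq]
    _ ≤ (∑ i ∈ t \ s, f i ^ 2) * ∑ i ∈ t \ s, g i ^ 2 := sum_mul_sq_le_sq_mul_sq _ f g
    _ = _ := by rw [sum_sdiff_eq_sub hst, sum_sdiff_eq_sub hst, h_sq]

theorem sum_sq_add_sum_sq_mul_le_of_sum_mul_eq_zero {s t : Finset ι} (hst : s ⊆ t) {f g : ι → R}
    (hfg : ∑ i ∈ t, f i * g i = 0) (hs : ∀ i ∈ s, f i = g i) :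
    (∑ i ∈ t, f i ^ 2 + ∑ i ∈ t, g i ^ 2) * ∑ i ∈ s, f i ^ 2 ≤
      (∑ i ∈ t, f i ^ 2) * ∑ i ∈ t, g i ^ 2 := by
  linear_combination sq_sum_sq_le_of_sum_mul_eq_zero hst hfg hs

theorem sum_normSq_mul_d_le_general [Fintype m] [Fintype n] (r : m → n → Prop) [DecidableRel r]
    (X Y : Matrix m n R) (hXY : (X * Yᵀ).trace = 0) (hoff : ∀ u v, ¬ r u v → X u v = Y u v) :
    (∑ u, ∑ v, X u v ^ 2 + ∑ u, ∑ v, Y u v ^ 2) * (∑ u, ∑ v, if ¬ r u v then X u v ^ 2 else 0) ≤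
      (∑ u, ∑ v, X u v ^ 2) * ∑ u, ∑ v, Y u v ^ 2 := by
  have h_orth : ∑ p : m × n, X p.1 p.2 * Y p.1 p.2 = 0 := by
    simpa only [Fintype.sum_prod_type, ← sum_hadamard_eq, hadamard_apply] using hXY
  have h_le := sum_sq_add_sum_sq_mul_le_of_sum_mul_eq_zero
    (filter_subset (fun p : m × n => ¬ r p.1 p.2) univ) h_orth
    fun p hp => hoff p.1 p.2 (mem_filter.1 hp).2
  simpa only [sum_filter, Fintype.sum_prod_type] using h_le

end

/-- If `X` and `Y` are real symmetric matrices indexed by the vertices of `G` with `XY = 0`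
and `X_{uv} = Y_{uv}` whenever `(u,v)` is not an edge, then, setting
`d := Σ_{(u,v) not an edge} X_{uv}²`, we have `(‖X‖² + ‖Y‖²) d ≤ ‖X‖² ‖Y‖²`. -/
theorem sum_normSq_mul_d_le {n : ℕ} (G : SimpleGraph (Fin n)) [DecidableRel G.Adj]
    (X Y : Matrix (Fin n) (Fin n) ℝ) (hXs : X.IsSymm) (hYs : Y.IsSymm)
    (hXY : X * Y = 0) (hoff : ∀ u v, ¬ G.Adj u v → X u v = Y u v)
    (d : ℝ) (hd : d = ∑ u, ∑ v, if ¬ G.Adj u v then (X u v) ^ 2 else 0) :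
    (∑ u, ∑ v, (X u v) ^ 2 + ∑ u, ∑ v, (Y u v) ^ 2) * d ≤
      (∑ u, ∑ v, (X u v) ^ 2) * (∑ u, ∑ v, (Y u v) ^ 2) := by
  subst hd
  exact sum_normSq_mul_d_le_general G.Adj X Y (by rw [hYs.eq, hXY, trace_zero]) hoff
end

section
/- Let G be a finite simple graph with m edges and adjacency matrix A over the reals, and let χ(G) denote the chromatic number of G. Let s⁺ and s⁻ denote the sum of the squares of the positive and of the negative eigenvalues of A, respectively. Then min{s⁺, s⁻} ≥ 2m / χ(G). -/
open Matrix Finset BigOperators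

/-!
Write `A = A⁺ - A⁻` and cut all matrices into blocks along a colouring with `k` colours. Since `A`
vanishes on the diagonal blocks, `A⁺` and `A⁻` agree there; let `t` be the sum of the squares of
these common entries, and `y`, `z` the sums of the squares of the remaining entries of `A⁺`, `A⁻`.

* The matrix `k I - J` is positive semidefinite, so by the Schur product theorem its pullback along
  the colouring has nonnegative Frobenius product with `A⁻ ⊙ (A⁻)ᵀ`. This says `t + z ≤ k t`.
* As `A⁺ A⁻ = 0`, the off-diagonal blocks of `A⁺` and `A⁻` have inner product `-t`, so `t² ≤ y z` by
  Cauchy–Schwarz, and therefore `t ≤ (k - 1) y`.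

Hence `‖A‖² = ‖A⁺‖² + ‖A⁻‖² ≤ (t + y) + k t ≤ k (t + y) = k ‖A⁺‖²` in the Frobenius norm. The bound
for `A⁻` is the same statement for `-A`.
-/

section InnerProduct

variable {E κ : Type*} [NormedAddCommGroup E] [InnerProductSpace ℝ E] [Fintype κ]
  {b c : κ → E} {s : Finset κ} {k : ℝ}

lemma sum_norm_sq_le_mul_sum_norm_sq_compl_of_sum_inner_eq_zero [DecidableEq κ] (hk : 1 ≤ k)
    (heq : Set.EqOn b c s) (horth : ∑ i, inner ℝ (b i) (c i) = 0)
    (hc : ∑ i, ‖c i‖ ^ 2 ≤ k * ∑ i ∈ s, ‖c i‖ ^ 2) :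
    ∑ i ∈ s, ‖c i‖ ^ 2 ≤ (k - 1) * ∑ i ∈ sᶜ, ‖b i‖ ^ 2 := by
  have hinner : ∑ i ∈ s, inner ℝ (b i) (c i) = ∑ i ∈ s, ‖c i‖ ^ 2 :=
    sum_congr rfl fun i hi => by rw [heq hi, real_inner_self_eq_norm_sq]
  rw [← sum_add_sum_compl s, hinner] at horth
  rw [← sum_add_sum_compl s] at hc
  set t := ∑ i ∈ s, ‖c i‖ ^ 2
  set y := ∑ i ∈ sᶜ, ‖b i‖ ^ 2
  set z := ∑ i ∈ sᶜ, ‖c i‖ ^ 2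
  have ht : 0 ≤ t := by positivity
  have hy : 0 ≤ y := by positivity
  have ht_le : t ≤ ∑ i ∈ sᶜ, ‖b i‖ * ‖c i‖ := calc
    t = ∑ i ∈ sᶜ, -inner ℝ (b i) (c i) := by rw [sum_neg_distrib]; linarith
    _ ≤ _ := sum_le_sum fun i _ => (neg_le_abs _).trans (abs_real_inner_le_norm _ _)
  have hcauchy : t ^ 2 ≤ y * z :=
    (pow_le_pow_left₀ ht ht_le 2).trans (sum_mul_sq_le_sq_mul_sq _ _ _)
  rcases ht.eq_or_lt with ht_zero | ht_pos
  · exact ht_zero ▸ mul_nonneg (sub_nonneg.2 hk) hy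
  · refine le_of_mul_le_mul_right ?_ ht_pos
    calc t * t ≤ y * z := by rwa [← sq]
      _ ≤ y * ((k - 1) * t) := by gcongr; linarith
      _ = (k - 1) * y * t := by ring

lemma sum_norm_sq_sub_le_of_sum_inner_eq_zero (hk : 1 ≤ k) (heq : Set.EqOn b c s)
    (horth : ∑ i, inner ℝ (b i) (c i) = 0)
    (hc : ∑ i, ‖c i‖ ^ 2 ≤ k * ∑ i ∈ s, ‖c i‖ ^ 2) :
    ∑ i, ‖b i - c i‖ ^ 2 ≤ k * ∑ i, ‖b i‖ ^ 2 := by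
  classical
  have hpythagoras : ∑ i, ‖b i - c i‖ ^ 2 = ∑ i, ‖b i‖ ^ 2 + ∑ i, ‖c i‖ ^ 2 := by
    simp only [norm_sub_sq_real, sum_add_distrib, sum_sub_distrib, ← mul_sum, horth]
    ring
  have hb : ∑ i, ‖b i‖ ^ 2 = ∑ i ∈ s, ‖c i‖ ^ 2 + ∑ i ∈ sᶜ, ‖b i‖ ^ 2 := by
    rw [← sum_add_sum_compl s]
    exact congrArg (· + _) (sum_congr rfl fun i hi => by rw [heq hi])
  have hcompl := sum_norm_sq_le_mul_sum_norm_sq_compl_of_sum_inner_eq_zero hk heq horth hc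
  rw [hpythagoras, hb]
  linarith

end InnerProduct

section HermitianMatrix

open scoped ComplexOrder MatrixOrder

variable {𝕜 ι m n : Type*} [RCLike 𝕜] [Fintype ι] [Fintype m] [Fintype n]

lemma posSemidef_card_sub_of_one [DecidableEq ι] :
    ((Fintype.card ι : Matrix ι ι 𝕜) - of 1).PosSemidef := by
  set L : Matrix ι ι 𝕜 := (Fintype.card ι : Matrix ι ι 𝕜) - of 1 with hL
  have hherm : Lᴴ = L :=
    (isHermitian_natCast _).sub (IsHermitian.ext fun _ _ => star_one 𝕜)
  have hones : (of 1 * of 1 : Matrix ι ι 𝕜) = of 1 * (Fintype.card ι : Matrix ι ι 𝕜) := by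
    rw [← nsmul_eq_mul']
    ext i j
    simp [mul_apply]
  have hsq : Lᴴ * L = (Fintype.card ι : ℝ) • L := by
    rw [hherm, Nat.cast_smul_eq_nsmul, nsmul_eq_mul]
    nth_rw 1 [hL]
    rw [sub_mul, sub_eq_self, hL, mul_sub, hones, sub_self]
  rcases isEmpty_or_nonempty ι with hι | hι
  · exact Subsingleton.elim L 0 ▸ PosSemidef.zero
  · have hcard : (Fintype.card ι : ℝ) ≠ 0 := by simp
    rw [← inv_smul_smul₀ hcard L, ← hsq]
    exact (posSemidef_conjTranspose_mul_self L).smul (by positivity)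

lemma sum_entries_le_card_mul_sum_entries_fiber [DecidableEq ι] {M : Matrix n n 𝕜}
    (hM : M.PosSemidef) (f : n → ι) :
    ∑ p : n × n, M p.1 p.2 ≤
      Fintype.card ι * ∑ p : n × n with f p.1 = f p.2, M p.1 p.2 := by
  have hsum := ((posSemidef_card_sub_of_one.submatrix f).hadamard hM).dotProduct_mulVec_nonneg 1
  simp only [sum_filter, Fintype.sum_prod_type]
  simpa [dotProduct, mulVec, Matrix.natCast_apply, sub_mul, mul_sum] using hsum

lemma sum_norm_sq_le_card_mul_sum_norm_sq_fiber [DecidableEq ι] {C : Matrix n n 𝕜}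
    (hC : C.PosSemidef) (f : n → ι) :
    ∑ p : n × n, ‖C p.1 p.2‖ ^ 2 ≤
      Fintype.card ι * ∑ p : n × n with f p.1 = f p.2, ‖C p.1 p.2‖ ^ 2 := by
  have hentry (u v : n) : (C ⊙ Cᵀ) u v = (‖C u v‖ ^ 2 : ℝ) := by
    rw [hadamard_apply, transpose_apply, ← hC.isHermitian.apply v u, RCLike.star_def,
      RCLike.mul_conj, RCLike.ofReal_pow]
  have hsum := sum_entries_le_card_mul_sum_entries_fiber (hC.hadamard hC.transpose) f
  simp only [hentry] at hsum
  exact_mod_cast hsum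

lemma trace_conjTranspose_mul_eq_sum_inner (B C : Matrix m n 𝕜) :
    (Bᴴ * C).trace = ∑ p : m × n, inner 𝕜 (B p.1 p.2) (C p.1 p.2) := by
  simp [trace, mul_apply, Fintype.sum_prod_type_right, mul_comm]

lemma sum_norm_sq_sub_le_card_mul_sum_norm_sq {B C : Matrix n n 𝕜} (hC : C.PosSemidef)
    (htr : (Bᴴ * C).trace = 0) {f : n → ι} (hf : ∀ u v, f u = f v → B u v = C u v) :
    ∑ p : n × n, ‖B p.1 p.2 - C p.1 p.2‖ ^ 2 ≤ Fintype.card ι * ∑ p : n × n, ‖B p.1 p.2‖ ^ 2 := by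
  classical
  rcases isEmpty_or_nonempty n with hn | ⟨⟨u⟩⟩
  · simp
  let _ := InnerProductSpace.rclikeToReal 𝕜 𝕜
  refine sum_norm_sq_sub_le_of_sum_inner_eq_zero (s := {p : n × n | f p.1 = f p.2}) ?_ ?_ ?_
    (sum_norm_sq_le_card_mul_sum_norm_sq_fiber hC f)
  · exact_mod_cast Fintype.card_pos_iff.2 ⟨f u⟩
  · intro p hp
    exact hf _ _ (by simpa using hp)
  · rw [trace_conjTranspose_mul_eq_sum_inner] at htr
    simpa [real_inner_eq_re_inner] using congrArg RCLike.re htr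

lemma sum_norm_sq_adjMatrix (G : SimpleGraph n) [DecidableRel G.Adj] :
    ∑ u, ∑ v, ‖G.adjMatrix 𝕜 u v‖ ^ 2 = 2 * (#G.edgeFinset : ℝ) := by
  have hrow (u : n) : ∑ v, ‖G.adjMatrix 𝕜 u v‖ ^ 2 = G.degree u := by
    simp [SimpleGraph.adjMatrix_apply, apply_ite, ← SimpleGraph.card_neighborFinset_eq_degree,
      SimpleGraph.neighborFinset_eq_filter]
  simp only [hrow]
  exact_mod_cast G.sum_degrees_eq_twice_card_edges

variable [DecidableEq n] {A : Matrix n n 𝕜}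

lemma trace_cfc_eq_sum_eigenvalues (hA : A.IsHermitian) (g : ℝ → ℝ) :
    (cfc g A).trace = ∑ i, (g (hA.eigenvalues i) : 𝕜) := by
  rw [hA.cfc_eq, IsHermitian.cfc, Unitary.conjStarAlgAut_apply, trace_mul_cycle,
    Unitary.coe_star_mul_self, one_mul, trace_diagonal]
  rfl

lemma sum_norm_sq_cfc_eq_sum_eigenvalues (hA : A.IsHermitian) (g : ℝ → ℝ) :
    ∑ p : n × n, ‖cfc g A p.1 p.2‖ ^ 2 = ∑ i, g (hA.eigenvalues i) ^ 2 := by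
  have hg : ContinuousOn g (spectrum ℝ A) := A.finite_real_spectrum.continuousOn g
  have htr : ((cfc g A)ᴴ * cfc g A).trace = ∑ i, ((g (hA.eigenvalues i) ^ 2 : ℝ) : 𝕜) := by
    rw [← star_eq_conjTranspose, (cfc_predicate g A).star_eq, ← sq, ← cfc_pow g 2 A hg]
    exact trace_cfc_eq_sum_eigenvalues hA _
  rw [trace_conjTranspose_mul_eq_sum_inner] at htr
  simp only [inner_self_eq_norm_sq_to_K] at htr
  exact_mod_cast htr

lemma sum_norm_sq_posPart_eq_sum_eigenvalues (hA : A.IsHermitian) :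
    ∑ p : n × n, ‖A⁺ p.1 p.2‖ ^ 2 =
      ∑ i, if 0 < hA.eigenvalues i then hA.eigenvalues i ^ 2 else 0 := by
  rw [CFC.posPart_def, cfcₙ_eq_cfc, sum_norm_sq_cfc_eq_sum_eigenvalues hA]
  refine sum_congr rfl fun i _ => ?_
  split_ifs with h
  · rw [posPart_of_nonneg h.le]
  · rw [posPart_of_nonpos (not_lt.1 h), zero_pow two_ne_zero]

lemma sum_norm_sq_negPart_eq_sum_eigenvalues (hA : A.IsHermitian) :
    ∑ p : n × n, ‖A⁻ p.1 p.2‖ ^ 2 =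
      ∑ i, if hA.eigenvalues i < 0 then hA.eigenvalues i ^ 2 else 0 := by
  rw [CFC.negPart_def, cfcₙ_eq_cfc, sum_norm_sq_cfc_eq_sum_eigenvalues hA]
  refine sum_congr rfl fun i _ => ?_
  split_ifs with h
  · rw [negPart_of_nonpos h.le, neg_sq]
  · rw [negPart_of_nonneg (not_lt.1 h), zero_pow two_ne_zero]

lemma sum_norm_sq_le_card_mul_sum_norm_sq_posPart (hA : A.IsHermitian) {f : n → ι}
    (hf : ∀ u v, f u = f v → A u v = 0) :
    ∑ p : n × n, ‖A p.1 p.2‖ ^ 2 ≤ Fintype.card ι * ∑ p : n × n, ‖A⁺ p.1 p.2‖ ^ 2 := by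
  have hsub (u v : n) : A⁺ u v - A⁻ u v = A u v :=
    congrFun₂ (CFC.posPart_sub_negPart A hA) u v
  have hherm : (A⁺)ᴴ = A⁺ := (CFC.posPart_nonneg A).isSelfAdjoint
  have htr : ((A⁺)ᴴ * A⁻).trace = 0 := by
    rw [hherm, CFC.posPart_mul_negPart, trace_zero]
  simpa only [hsub] using sum_norm_sq_sub_le_card_mul_sum_norm_sq
    (nonneg_iff_posSemidef.1 (CFC.negPart_nonneg A)) htr
    fun u v huv => sub_eq_zero.1 ((hsub u v).trans (hf u v huv))

lemma sum_norm_sq_le_card_mul_sum_norm_sq_negPart (hA : A.IsHermitian) {f : n → ι}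
    (hf : ∀ u v, f u = f v → A u v = 0) :
    ∑ p : n × n, ‖A p.1 p.2‖ ^ 2 ≤ Fintype.card ι * ∑ p : n × n, ‖A⁻ p.1 p.2‖ ^ 2 := by
  simpa only [Matrix.neg_apply, norm_neg, CFC.posPart_neg] using
    sum_norm_sq_le_card_mul_sum_norm_sq_posPart hA.neg
      fun u v huv => neg_eq_zero.2 (hf u v huv)

theorem min_sum_squares_ge_two_m_div_chromaticNumber_general (G : SimpleGraph n)
    (hA : A.IsHermitian) (hG : ∀ u v, ¬G.Adj u v → A u v = 0) :
    min (∑ i, if 0 < hA.eigenvalues i then hA.eigenvalues i ^ 2 else 0)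
        (∑ i, if hA.eigenvalues i < 0 then hA.eigenvalues i ^ 2 else 0) ≥
      (∑ u, ∑ v, ‖A u v‖ ^ 2) / (G.chromaticNumber.toNat : ℝ) := by
  obtain ⟨c⟩ := SimpleGraph.colorable_chromaticNumber G.colorable_of_fintype
  have hc (u v : n) (huv : c u = c v) : A u v = 0 := hG u v fun hadj => c.valid hadj huv
  rw [← sum_norm_sq_posPart_eq_sum_eigenvalues hA, ← sum_norm_sq_negPart_eq_sum_eigenvalues hA,
    ← Fintype.sum_prod_type' fun u v => ‖A u v‖ ^ 2]
  refine le_min (div_le_of_le_mul₀ (by positivity) (by positivity) ?_)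
    (div_le_of_le_mul₀ (by positivity) (by positivity) ?_)
  · simpa [mul_comm] using sum_norm_sq_le_card_mul_sum_norm_sq_posPart hA hc
  · simpa [mul_comm] using sum_norm_sq_le_card_mul_sum_norm_sq_negPart hA hc

end HermitianMatrix

/-- (Ando–Lin) For every graph `G` with `m` edges and chromatic number `χ(G)`,
`min {s⁺, s⁻} ≥ 2m / χ(G)`. -/
theorem min_sum_squares_ge_two_m_div_chromaticNumber {n : ℕ} (G : SimpleGraph (Fin n))
    [DecidableRel G.Adj] :
    min (sPlus G) (sMinus G) ≥
      2 * (G.edgeFinset.card : ℝ) / (G.chromaticNumber.toNat : ℝ) := by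
  rw [← sum_norm_sq_adjMatrix (𝕜 := ℝ) G]
  exact min_sum_squares_ge_two_m_div_chromaticNumber_general G (adjHerm G) fun u v h => by simp [h]
end
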